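/- arXiv:2206.11295 — 3 statements merged into one kernel-verified Lean document; each statement's English description precedes it below -/
import Mathlib

section
/- Let m ≥ 2 and let B_1,…,B_n (n ≥ 2) be a partition of {1,…,m} into nonempty blocks; write k ≁ l if k,l lie in different blocks, and for each i let F_i = {x ∈ ℝ^m : x_k = 0 for all k ∉ B_i}. Suppose given: (i) for each i, a smooth positive function h_i defined on a neighborhood of 0 in the block-B_i coordinate subspace (identified with ℝ^{|B_i|}), with h_1(0) = h_2(0) = … = h_n(0); (ii) smooth functions A_{kl}, defined on a neighborhood of 0 in ℝ^m for each pair k ≁ l, satisfying A_{kl} = A_{lk} and the compatibility condition ∂_a A_{bc} = ∂_b A_{ac} for all indices a,b,c with a ≁ c and b ≁ c. Then there exist a neighborhood U of 0 in ℝ^m and a unique smooth positive function h : U → ℝ such that h(x) = h_i(x_{B_i}) for every x ∈ U ∩ F_i and every i, and ∂²(log h)/∂x_k∂x_l = A_{kl} on U for every pair k ≁ l. (Uniqueness means: any two such functions agree on a neighborhood of 0.) -/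
open MeasureTheory

noncomputable section

/-- Partial derivative `∂f/∂x_a` at `x`. -/
def pd {m : ℕ} (f : (Fin m → ℝ) → ℝ) (a : Fin m) (x : Fin m → ℝ) : ℝ :=
  fderiv ℝ f x (Pi.single a (1:ℝ))

/-- Second mixed partial derivative `∂²(log h)/∂x_k∂x_l` at `x`. -/
def logpd2 {m : ℕ} (h : (Fin m → ℝ) → ℝ) (k l : Fin m) (x : Fin m → ℝ) : ℝ :=
  fderiv ℝ (fun y => fderiv ℝ (fun z => Real.log (h z)) y (Pi.single k (1:ℝ)))
    x (Pi.single l 1)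

/-- Differentiation under the integral sign for a jointly smooth integrand. -/
theorem hasFDerivAt_param {E F : Type} [NormedAddCommGroup E] [NormedSpace ℝ E]
    [FiniteDimensional ℝ E] [NormedAddCommGroup F] [NormedSpace ℝ F]
    (G : E → ℝ → F) (hG : ContDiff ℝ (⊤ : ℕ∞) (fun p : E × ℝ => G p.1 p.2)) (x : E) :
    HasFDerivAt (fun x => ∫ t in (0:ℝ)..1, G x t)
      (∫ t in (0:ℝ)..1, fderiv ℝ (fun y => G y t) x) x := by
  have hc : Continuous (fun p : E × ℝ => fderiv ℝ (fun y => G y p.2) p.1) := by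
    have : ContDiff ℝ (⊤ : ℕ∞) (fun p : E × ℝ => fderiv ℝ (fun y => G y p.2) p.1) := by
      refine ContDiff.fderiv (f := fun (p : E × ℝ) (y : E) => G y p.2) (n := (⊤ : ℕ∞)) (m := (⊤ : ℕ∞)) ?_
        contDiff_fst (by simp)
      exact hG.comp (f := fun q : (E × ℝ) × E => (q.2, q.1.2)) (by fun_prop)
    exact this.continuous
  have hcG : Continuous (fun p : E × ℝ => G p.1 p.2) := hG.continuous
  have : ProperSpace E := FiniteDimensional.proper ℝ E
  obtain ⟨C, hC⟩ := ((isCompact_closedBall x 1).prod (isCompact_Icc (a := (0:ℝ)) (b := 1))).exists_bound_of_continuousOn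
    hc.continuousOn
  refine intervalIntegral.hasFDerivAt_integral_of_dominated_of_fderiv_le
    (F := G) (F' := fun x t => fderiv ℝ (fun y => G y t) x) (bound := fun _ => C)
    (Metric.closedBall_mem_nhds x one_pos) ?_ ?_ ?_ ?_ ?_ ?_
  · refine Filter.Eventually.of_forall fun y => ?_
    exact (hcG.comp (f := fun t : ℝ => (y, t)) (by fun_prop)).aestronglyMeasurable
  · exact (hcG.comp (f := fun t : ℝ => (x, t)) (by fun_prop)).intervalIntegrable _ _
  · exact (hc.comp (f := fun t : ℝ => (x, t)) (by fun_prop)).aestronglyMeasurable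
  · refine Filter.Eventually.of_forall fun t ht y hy => ?_
    rw [Set.uIoc_of_le zero_le_one] at ht
    exact hC (y, t) ⟨hy, ht.1.le, ht.2⟩
  · exact intervalIntegrable_const
  · refine Filter.Eventually.of_forall fun t ht y hy => ?_
    have : ContDiff ℝ (⊤ : ℕ∞) (fun y => G y t) :=
      hG.comp (f := fun y : E => (y, t)) (by fun_prop)
    exact (this.differentiable (by simp) y).hasFDerivAt

theorem contDiff_param_nat {E : Type} [NormedAddCommGroup E] [NormedSpace ℝ E]
    [FiniteDimensional ℝ E] (n : ℕ) : ∀ {F : Type} [NormedAddCommGroup F] [NormedSpace ℝ F]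
    (G : E → ℝ → F) (_ : ContDiff ℝ (⊤ : ℕ∞) (fun p : E × ℝ => G p.1 p.2)),
    ContDiff ℝ n (fun x => ∫ t in (0:ℝ)..1, G x t) := by
  induction n with
  | zero =>
    intro F _ _ G hG
    have : Differentiable ℝ (fun x => ∫ t in (0:ℝ)..1, G x t) :=
      fun x => (hasFDerivAt_param G hG x).differentiableAt
    exact_mod_cast contDiff_zero.2 this.continuous
  | succ n ih =>
    intro F _ _ G hG
    push_cast
    rw [contDiff_succ_iff_fderiv]
    refine ⟨fun x => (hasFDerivAt_param G hG x).differentiableAt, by simp, ?_⟩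
    have : fderiv ℝ (fun x => ∫ t in (0:ℝ)..1, G x t) =
        fun x => ∫ t in (0:ℝ)..1, fderiv ℝ (fun y => G y t) x :=
      funext fun x => (hasFDerivAt_param G hG x).fderiv
    rw [this]
    refine ih (fun x t => fderiv ℝ (fun y => G y t) x) ?_
    refine ContDiff.fderiv (f := fun (p : E × ℝ) (y : E) => G y p.2) (n := (⊤ : ℕ∞)) (m := (⊤ : ℕ∞)) ?_
        contDiff_fst (by simp)
    exact hG.comp (f := fun q : (E × ℝ) × E => (q.2, q.1.2)) (by fun_prop)

theorem contDiff_param {E : Type} [NormedAddCommGroup E] [NormedSpace ℝ E]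
    [FiniteDimensional ℝ E] {F : Type} [NormedAddCommGroup F] [NormedSpace ℝ F]
    (G : E → ℝ → F) (hG : ContDiff ℝ (⊤ : ℕ∞) (fun p : E × ℝ => G p.1 p.2)) :
    ContDiff ℝ (⊤ : ℕ∞) (fun x => ∫ t in (0:ℝ)..1, G x t) :=
  contDiff_infty.2 fun n => contDiff_param_nat n G hG

/-- Global smooth extension of a germ. -/
theorem exists_global {m : ℕ} (f : (Fin m → ℝ) → ℝ) (V : Set (Fin m → ℝ)) (hV : IsOpen V)
    (r : ℝ) (hr : 0 < r) (hrV : Metric.closedBall 0 (2 * r) ⊆ V)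
    (hf : ContDiffOn ℝ (⊤ : ℕ∞) f V) :
    ∃ F : (Fin m → ℝ) → ℝ, ContDiff ℝ (⊤ : ℕ∞) F ∧ ∀ x ∈ Metric.ball 0 r, F x = f x := by
  let χ : ContDiffBump (0 : Fin m → ℝ) := ⟨r, 2 * r, hr, by linarith⟩
  refine ⟨fun x => χ x * f x, ?_, ?_⟩
  · rw [contDiff_iff_contDiffAt]
    intro x
    by_cases hx : x ∈ V
    · exact χ.contDiff.contDiffAt.mul (hf.contDiffAt (hV.mem_nhds hx))
    · have : x ∉ tsupport χ := by
        rw [χ.tsupport_eq]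
        exact fun h => hx (hrV h)
      have h2 : (fun x => χ x * f x) =ᶠ[nhds x] fun _ => 0 := by
        filter_upwards [notMem_tsupport_iff_eventuallyEq.1 this] with y hy
        simp [hy]
      exact contDiffAt_const.congr_of_eventuallyEq h2
  · intro x hx
    have : χ x = 1 := χ.one_of_mem_closedBall (Metric.ball_subset_closedBall hx)
    simp [this]

/-- A function invariant under translations along `v` has zero derivative along `v`. -/
theorem fderiv_invariant {E : Type} [NormedAddCommGroup E] [NormedSpace ℝ E]
    (u : E → ℝ) (v : E) (x : E) (hu : ∀ᶠ t : ℝ in nhds 0, u (x + t • v) = u x) :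
    fderiv ℝ u x v = 0 := by
  by_cases hd : DifferentiableAt ℝ u x
  · rw [← hd.lineDeriv_eq_fderiv]
    unfold lineDeriv
    have : (fun t : ℝ => u (x + t • v)) =ᶠ[nhds 0] fun _ => u x := hu
    rw [this.deriv_eq]; simp
  · rw [fderiv_zero_of_not_differentiableAt hd]; simp

theorem eq_of_dir_zero {E : Type} [NormedAddCommGroup E] [NormedSpace ℝ E]
    (u : E → ℝ) (s : Set E) (hs : Convex ℝ s) (hd : ∀ z ∈ s, DifferentiableAt ℝ u z) {p x : E}
    (hp : p ∈ s) (hx : x ∈ s) (h0 : ∀ z ∈ segment ℝ p x, fderiv ℝ u z (x - p) = 0) :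
    u x = u p := by
  obtain ⟨z, hz, h⟩ := domain_mvt (f := u) (f' := fun z => fderiv ℝ u z)
    (fun z hz => (hd z hz).hasFDerivAt.hasFDerivWithinAt) hs hp hx
  rw [h0 z hz] at h
  linarith

theorem clm_apply_sum {m : ℕ} (L : (Fin m → ℝ) →L[ℝ] ℝ) (v : Fin m → ℝ) :
    L v = ∑ l, v l * L (Pi.single l 1) := by
  conv_lhs => rw [pi_eq_sum_univ' v]
  simp

/-- projection to the block of index `i`. -/
def blk {m n : ℕ} (b : Fin m → Fin n) (i : Fin n) (x : Fin m → ℝ) : Fin m → ℝ :=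
  fun k => if b k = i then x k else 0

theorem blk_mem_ball {m n : ℕ} (b : Fin m → Fin n) (i : Fin n) (x : Fin m → ℝ) (r : ℝ)
    (hx : x ∈ Metric.ball 0 r) : blk b i x ∈ Metric.ball 0 r := by
  rw [mem_ball_zero_iff] at hx ⊢
  refine lt_of_le_of_lt ?_ hx
  rw [pi_norm_le_iff_of_nonneg (norm_nonneg _)]
  intro k
  unfold blk
  split_ifs
  · exact norm_le_pi_norm x k
  · simp

theorem uniq_aux {m n : ℕ} (b : Fin m → Fin n) (u : (Fin m → ℝ) → ℝ) (r : ℝ) (hr : 0 < r)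
    (hn : 0 < n)
    (hu : ContDiffOn ℝ (⊤ : ℕ∞) u (Metric.ball 0 r))
    (h0 : ∀ i, ∀ x ∈ Metric.ball (0 : Fin m → ℝ) r, (∀ k, b k ≠ i → x k = 0) → u x = 0)
    (h2 : ∀ k l, b k ≠ b l → ∀ x ∈ Metric.ball (0 : Fin m → ℝ) r,
      fderiv ℝ (fun y => fderiv ℝ u y (Pi.single k 1)) x (Pi.single l 1) = 0) :
    ∀ x ∈ Metric.ball (0 : Fin m → ℝ) r, u x = 0 := by
  have hud : ∀ z ∈ Metric.ball (0 : Fin m → ℝ) r, DifferentiableAt ℝ u z := fun z hz =>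
    (hu.contDiffAt (Metric.isOpen_ball.mem_nhds hz)).differentiableAt (by simp)
  have h1 : ∀ k, ∀ x ∈ Metric.ball (0 : Fin m → ℝ) r, fderiv ℝ u x (Pi.single k 1) = 0 := by
    intro k x hx
    have hd : ∀ z ∈ Metric.ball (0 : Fin m → ℝ) r,
        DifferentiableAt ℝ (fun y => fderiv ℝ u y (Pi.single k 1)) z := by
      intro z hz
      have := (((contDiffOn_infty_iff_fderiv_of_isOpen Metric.isOpen_ball).1 hu).2.contDiffAt
        (Metric.isOpen_ball.mem_nhds hz)).differentiableAt (by simp)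
      exact this.clm_apply (differentiableAt_const _)
    have hp := blk_mem_ball b (b k) x r hx
    rw [eq_of_dir_zero (fun y => fderiv ℝ u y (Pi.single k 1)) _ (convex_ball 0 r) hd hp hx ?_]
    · apply fderiv_invariant
      have hc : ContinuousAt (fun t : ℝ => blk b (b k) x + t • (Pi.single k 1 : Fin m → ℝ)) 0 := by
        fun_prop
      have : Metric.ball (0 : Fin m → ℝ) r ∈
          nhds (blk b (b k) x + (0:ℝ) • (Pi.single k 1 : Fin m → ℝ)) := by
        rw [zero_smul, add_zero]; exact Metric.isOpen_ball.mem_nhds hp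
      filter_upwards [hc this] with t ht
      rw [h0 (b k) _ hp, h0 (b k) _ ht]
      · intro j hj
        have : j ≠ k := by rintro rfl; exact hj rfl
        simp [blk, hj, this]
      · intro j hj
        simp [blk, hj]
    · intro z hz
      have hz' := (convex_ball 0 r).segment_subset hp hx hz
      rw [clm_apply_sum]
      refine Finset.sum_eq_zero fun l _ => ?_
      by_cases hl : b l = b k
      · simp [blk, hl]
      · rw [h2 k l (Ne.symm hl) z hz', mul_zero]
  intro x hx
  have hz : (0 : Fin m → ℝ) ∈ Metric.ball 0 r := Metric.mem_ball_self hr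
  rw [eq_of_dir_zero u _ (convex_ball 0 r) hud hz hx ?_]
  · exact h0 ⟨0, hn⟩ 0 hz (by simp)
  · intro z hz'
    rw [clm_apply_sum]
    refine Finset.sum_eq_zero fun l _ => ?_
    rw [h1 l z ((convex_ball 0 r).segment_subset hz hx hz'), mul_zero]

theorem contDiff_fderiv_param {E F : Type} [NormedAddCommGroup E] [NormedSpace ℝ E]
    [NormedAddCommGroup F] [NormedSpace ℝ F]
    (G : E → ℝ → F) (hG : ContDiff ℝ (⊤ : ℕ∞) (fun p : E × ℝ => G p.1 p.2)) :
    ContDiff ℝ (⊤ : ℕ∞) (fun p : E × ℝ => fderiv ℝ (fun y => G y p.2) p.1) := by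
  refine ContDiff.fderiv (f := fun (p : E × ℝ) (y : E) => G y p.2) (n := (⊤ : ℕ∞))
    (m := (⊤ : ℕ∞)) ?_ contDiff_fst (by simp)
  exact hG.comp (f := fun q : (E × ℝ) × E => (q.2, q.1.2)) (by fun_prop)

theorem fderiv_param_apply {E : Type} [NormedAddCommGroup E] [NormedSpace ℝ E]
    [FiniteDimensional ℝ E]
    (G : E → ℝ → ℝ) (hG : ContDiff ℝ (⊤ : ℕ∞) (fun p : E × ℝ => G p.1 p.2)) (x v : E) :
    fderiv ℝ (fun x => ∫ t in (0:ℝ)..1, G x t) x v =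
      ∫ t in (0:ℝ)..1, fderiv ℝ (fun y => G y t) x v := by
  rw [(hasFDerivAt_param G hG x).fderiv, ContinuousLinearMap.intervalIntegral_apply]
  exact ((contDiff_fderiv_param G hG).continuous.comp
    (f := fun t : ℝ => (x, t)) (by fun_prop)).intervalIntegrable _ _

/-- scaling of the coordinates outside the block `i`. -/
def scl {m n : ℕ} (b : Fin m → Fin n) (i : Fin n) (t : ℝ) (x : Fin m → ℝ) : Fin m → ℝ :=
  fun k => if b k = i then x k else t * x k

/-- the same as a continuous linear map. -/
def sclL {m n : ℕ} (b : Fin m → Fin n) (i : Fin n) (t : ℝ) : (Fin m → ℝ) →L[ℝ] (Fin m → ℝ) :=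
  ContinuousLinearMap.pi fun k => (if b k = i then (1:ℝ) else t) • ContinuousLinearMap.proj k

theorem sclL_apply {m n : ℕ} (b : Fin m → Fin n) (i : Fin n) (t : ℝ) (x : Fin m → ℝ) :
    sclL b i t x = scl b i t x := by
  ext k
  simp only [sclL, scl, ContinuousLinearMap.coe_pi', _root_.smul_apply,
    ContinuousLinearMap.proj_apply]
  split_ifs <;> simp

theorem scl_single {m n : ℕ} (b : Fin m → Fin n) (i : Fin n) (t : ℝ) (j : Fin m) :
    scl b i t (Pi.single j 1) = (if b j = i then (1:ℝ) else t) • (Pi.single j 1 : Fin m → ℝ) := by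
  ext k
  by_cases h : k = j
  · subst h; simp [scl]
  · simp [scl, h]

theorem scl_mem_ball {m n : ℕ} (b : Fin m → Fin n) (i : Fin n) (t : ℝ) (ht : t ∈ Set.Icc (0:ℝ) 1)
    (x : Fin m → ℝ) (r : ℝ) (hx : x ∈ Metric.ball 0 r) : scl b i t x ∈ Metric.ball 0 r := by
  rw [mem_ball_zero_iff] at hx ⊢
  refine lt_of_le_of_lt ?_ hx
  rw [pi_norm_le_iff_of_nonneg (norm_nonneg _)]
  intro k
  unfold scl
  split_ifs
  · exact norm_le_pi_norm x k
  · rw [norm_mul, Real.norm_of_nonneg ht.1]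
    calc t * ‖x k‖ ≤ 1 * ‖x k‖ := by gcongr; exact ht.2
      _ ≤ ‖x‖ := by rw [one_mul]; exact norm_le_pi_norm x k

theorem contDiff_scl {m n : ℕ} (b : Fin m → Fin n) (i : Fin n) :
    ContDiff ℝ (⊤ : ℕ∞) (fun p : (Fin m → ℝ) × ℝ => scl b i p.2 p.1) := by
  rw [contDiff_pi]
  intro k
  unfold scl
  split_ifs <;> fun_prop

/-- The integrand. -/
def Gint {m n : ℕ} (b : Fin m → Fin n) (A : Fin m → Fin m → (Fin m → ℝ) → ℝ) (k : Fin m)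
    (x : Fin m → ℝ) (t : ℝ) : ℝ := ∑ l, x l * A k l (scl b (b k) t x)

theorem contDiff_Gint {m n : ℕ} (b : Fin m → Fin n) (A : Fin m → Fin m → (Fin m → ℝ) → ℝ)
    (hA : ∀ k l, ContDiff ℝ (⊤ : ℕ∞) (A k l)) (k : Fin m) :
    ContDiff ℝ (⊤ : ℕ∞) (fun p : (Fin m → ℝ) × ℝ => Gint b A k p.1 p.2) := by
  unfold Gint
  refine ContDiff.sum fun l _ => ContDiff.mul (by fun_prop) ?_
  exact (hA k l).comp (contDiff_scl b (b k))

theorem fderiv_Gint {m n : ℕ} (b : Fin m → Fin n) (A : Fin m → Fin m → (Fin m → ℝ) → ℝ)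
    (hA : ∀ k l, ContDiff ℝ (⊤ : ℕ∞) (A k l)) (k j : Fin m) (t : ℝ) (x : Fin m → ℝ) :
    fderiv ℝ (fun y => Gint b A k y t) x (Pi.single j 1) =
      (if b j = b k then (1:ℝ) else t) * ∑ l, x l * pd (A k l) j (scl b (b k) t x)
        + A k j (scl b (b k) t x) := by
  have h1 : ∀ l, HasFDerivAt (fun y => A k l (scl b (b k) t y))
      ((fderiv ℝ (A k l) (scl b (b k) t x)).comp (sclL b (b k) t)) x := by
    intro l
    have h := ((hA k l).differentiable (by simp) (scl b (b k) t x)).hasFDerivAt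
    rw [← sclL_apply] at h
    have := h.comp x (sclL b (b k) t).hasFDerivAt
    rw [sclL_apply] at this
    refine this.congr_of_eventuallyEq (Filter.Eventually.of_forall fun y => ?_)
    simp [sclL_apply]
  have h2 : HasFDerivAt (fun y => Gint b A k y t) (∑ l, (x l •
      ((fderiv ℝ (A k l) (scl b (b k) t x)).comp (sclL b (b k) t)) +
        A k l (scl b (b k) t x) • (ContinuousLinearMap.proj l : (Fin m → ℝ) →L[ℝ] ℝ))) x := by
    unfold Gint
    exact HasFDerivAt.fun_sum fun l _ => (hasFDerivAt_apply l x).mul (h1 l)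
  rw [h2.fderiv]
  simp only [_root_.sum_apply, _root_.add_apply,
    _root_.smul_apply, ContinuousLinearMap.comp_apply, sclL_apply, scl_single,
    map_smul, ContinuousLinearMap.proj_apply, Finset.sum_add_distrib, smul_eq_mul]
  congr 1
  · rw [Finset.mul_sum]
    refine Finset.sum_congr rfl fun l _ => ?_
    unfold pd; ring
  · rw [Finset.sum_eq_single j]
    · simp
    · intro l _ hl; simp [hl]
    · simp

/-- The first derivatives. -/
def theta {m n : ℕ} (b : Fin m → Fin n) (A : Fin m → Fin m → (Fin m → ℝ) → ℝ) (k : Fin m)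
    (x : Fin m → ℝ) : ℝ := ∫ t in (0:ℝ)..1, Gint b A k x t

theorem contDiff_theta {m n : ℕ} (b : Fin m → Fin n) (A : Fin m → Fin m → (Fin m → ℝ) → ℝ)
    (hA : ∀ k l, ContDiff ℝ (⊤ : ℕ∞) (A k l)) (k : Fin m) :
    ContDiff ℝ (⊤ : ℕ∞) (theta b A k) := contDiff_param _ (contDiff_Gint b A hA k)

theorem fderiv_theta {m n : ℕ} (b : Fin m → Fin n) (A : Fin m → Fin m → (Fin m → ℝ) → ℝ)
    (hA : ∀ k l, ContDiff ℝ (⊤ : ℕ∞) (A k l)) (k j : Fin m) (x : Fin m → ℝ) :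
    fderiv ℝ (theta b A k) x (Pi.single j 1) = ∫ t in (0:ℝ)..1,
      ((if b j = b k then (1:ℝ) else t) * ∑ l, x l * pd (A k l) j (scl b (b k) t x)
        + A k j (scl b (b k) t x)) := by
  have := fderiv_param_apply (Gint b A k) (contDiff_Gint b A hA k) x (Pi.single j 1)
  unfold theta
  rw [this]
  refine intervalIntegral.integral_congr fun t _ => ?_
  exact fderiv_Gint b A hA k j t x

theorem theta_cross {m n : ℕ} (b : Fin m → Fin n) (A : Fin m → Fin m → (Fin m → ℝ) → ℝ)
    (hA : ∀ k l, ContDiff ℝ (⊤ : ℕ∞) (A k l)) (r : ℝ)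
    (hA0 : ∀ k l, b k = b l → A k l = 0)
    (hsymm : ∀ k l, ∀ x ∈ Metric.ball (0 : Fin m → ℝ) r, A k l x = A l k x)
    (hcomp : ∀ a c d, b a ≠ b d → b c ≠ b d → ∀ x ∈ Metric.ball (0 : Fin m → ℝ) r,
      pd (A c d) a x = pd (A a d) c x)
    (k j : Fin m) (hkj : b k ≠ b j) (x : Fin m → ℝ) (hx : x ∈ Metric.ball (0 : Fin m → ℝ) r) :
    fderiv ℝ (theta b A k) x (Pi.single j 1) = A k j x := by
  have hps : ∀ k l j, ∀ z ∈ Metric.ball (0 : Fin m → ℝ) r, pd (A k l) j z = pd (A l k) j z := by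
    intro k l j z hz
    have : A k l =ᶠ[nhds z] A l k := by
      filter_upwards [Metric.isOpen_ball.mem_nhds hz] with y hy using hsymm k l y hy
    unfold pd
    rw [this.fderiv_eq]
  rw [fderiv_theta b A hA]
  have hpath : ∀ t : ℝ, HasDerivAt (fun t : ℝ => scl b (b k) t x)
      (fun l => if b l = b k then 0 else x l) t := by
    intro t
    rw [hasDerivAt_pi]
    intro l
    unfold scl
    by_cases h : b l = b k
    · simp only [h, if_true]; exact hasDerivAt_const _ _
    · simp only [h, if_false]; simpa using (hasDerivAt_id t).mul_const (x l)
  have hder : ∀ t : ℝ, HasDerivAt (fun t : ℝ => t * A k j (scl b (b k) t x))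
      (1 * A k j (scl b (b k) t x) + t * fderiv ℝ (A k j) (scl b (b k) t x)
        (fun l => if b l = b k then 0 else x l)) t := by
    intro t
    have h := ((hA k j).differentiable (by simp) (scl b (b k) t x)).hasFDerivAt
    exact (hasDerivAt_id t).mul (h.comp_hasDerivAt t (hpath t))
  have hcs : Continuous fun t : ℝ => scl b (b k) t x :=
    (contDiff_scl b (b k)).continuous.comp (f := fun t : ℝ => (x, t)) (by fun_prop)
  have hci : Continuous fun t : ℝ => (1 * A k j (scl b (b k) t x) +
      t * fderiv ℝ (A k j) (scl b (b k) t x) (fun l => if b l = b k then 0 else x l)) := by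
    have h1 : Continuous fun t : ℝ => A k j (scl b (b k) t x) := (hA k j).continuous.comp hcs
    have h2 : Continuous fun t : ℝ => fderiv ℝ (A k j) (scl b (b k) t x) :=
      ((hA k j).continuous_fderiv (by simp)).comp hcs
    fun_prop
  have hftc := intervalIntegral.integral_eq_sub_of_hasDerivAt (a := 0) (b := 1)
    (fun t _ => hder t) (hci.intervalIntegrable _ _)
  have h1 : scl b (b k) 1 x = x := by ext l; simp [scl]
  rw [h1] at hftc
  simp only [zero_mul, sub_zero, one_mul] at hftc
  rw [← hftc]
  refine intervalIntegral.integral_congr fun t ht => ?_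
  rw [Set.uIcc_of_le zero_le_one] at ht
  have hz := scl_mem_ball b (b k) t ht x r hx
  simp only [if_neg (Ne.symm hkj)]
  rw [clm_apply_sum, add_comm]
  congr 2
  refine Finset.sum_congr rfl fun l _ => ?_
  by_cases hl : b l = b k
  · rw [hA0 k l hl.symm]; simp [pd, hl]
  · rw [if_neg hl]
    congr 1
    rw [hps k l j _ hz, hcomp j l k (Ne.symm hkj) hl _ hz, hps j k l _ hz]
    rfl

theorem theta_symm {m n : ℕ} (b : Fin m → Fin n) (A : Fin m → Fin m → (Fin m → ℝ) → ℝ)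
    (hA : ∀ k l, ContDiff ℝ (⊤ : ℕ∞) (A k l)) (r : ℝ)
    (hA0 : ∀ k l, b k = b l → A k l = 0)
    (hsymm : ∀ k l, ∀ x ∈ Metric.ball (0 : Fin m → ℝ) r, A k l x = A l k x)
    (hcomp : ∀ a c d, b a ≠ b d → b c ≠ b d → ∀ x ∈ Metric.ball (0 : Fin m → ℝ) r,
      pd (A c d) a x = pd (A a d) c x)
    (k j : Fin m) (x : Fin m → ℝ) (hx : x ∈ Metric.ball (0 : Fin m → ℝ) r) :
    fderiv ℝ (theta b A k) x (Pi.single j 1) = fderiv ℝ (theta b A j) x (Pi.single k 1) := by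
  by_cases h : b k = b j
  · rw [fderiv_theta b A hA, fderiv_theta b A hA]
    refine intervalIntegral.integral_congr fun t ht => ?_
    rw [Set.uIcc_of_le zero_le_one] at ht
    have hz := scl_mem_ball b (b k) t ht x r hx
    simp only [h, hA0 k j h, hA0 j k h.symm]
    rw [h] at hz
    congr 2
    refine Finset.sum_congr rfl fun l _ => ?_
    by_cases hl : b l = b j
    · rw [hA0 k l (h.trans hl.symm), hA0 j l hl.symm]; simp [pd]
    · rw [hcomp j k l (Ne.symm hl) (by rw [h]; exact Ne.symm hl) _ hz]
  · rw [theta_cross b A hA r hA0 hsymm hcomp k j h x hx,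
      theta_cross b A hA r hA0 hsymm hcomp j k (Ne.symm h) x hx, hsymm k j x hx]

theorem theta_zero {m n : ℕ} (b : Fin m → Fin n) (A : Fin m → Fin m → (Fin m → ℝ) → ℝ)
    (hA0 : ∀ k l, b k = b l → A k l = 0) (k : Fin m) (x : Fin m → ℝ)
    (hx : ∀ l, b l ≠ b k → x l = 0) : theta b A k x = 0 := by
  unfold theta
  have : ∀ t, Gint b A k x t = 0 := by
    intro t
    unfold Gint
    refine Finset.sum_eq_zero fun l _ => ?_
    by_cases hl : b l = b k
    · rw [hA0 k l hl.symm]; simp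
    · rw [hx l hl, zero_mul]
  simp [this]

theorem exists_phi {m n : ℕ} (b : Fin m → Fin n) (A : Fin m → Fin m → (Fin m → ℝ) → ℝ)
    (hA : ∀ k l, ContDiff ℝ (⊤ : ℕ∞) (A k l)) (r : ℝ) (hr : 0 < r)
    (hA0 : ∀ k l, b k = b l → A k l = 0)
    (hsymm : ∀ k l, ∀ x ∈ Metric.ball (0 : Fin m → ℝ) r, A k l x = A l k x)
    (hcomp : ∀ a c d, b a ≠ b d → b c ≠ b d → ∀ x ∈ Metric.ball (0 : Fin m → ℝ) r,
      pd (A c d) a x = pd (A a d) c x) :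
    ∃ Φ : (Fin m → ℝ) → ℝ, ContDiffOn ℝ (⊤ : ℕ∞) Φ (Metric.ball 0 r) ∧
      (∀ i, ∀ x ∈ Metric.ball (0 : Fin m → ℝ) r, (∀ k, b k ≠ i → x k = 0) → Φ x = 0) ∧
      (∀ k, ∀ x ∈ Metric.ball (0 : Fin m → ℝ) r,
        fderiv ℝ Φ x (Pi.single k 1) = theta b A k x) := by
  let ω : (Fin m → ℝ) → ((Fin m → ℝ) →L[ℝ] ℝ) := fun x =>
    ∑ k, theta b A k x • (ContinuousLinearMap.proj k : (Fin m → ℝ) →L[ℝ] ℝ)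
  have hωs : ContDiff ℝ (⊤ : ℕ∞) ω :=
    ContDiff.sum fun k _ => (contDiff_theta b A hA k).smul contDiff_const
  have hωa : ∀ x v, ω x v = ∑ k, theta b A k x * v k := by
    intro x v; simp [ω]
  have hω1 : ∀ x k, ω x (Pi.single k 1) = theta b A k x := by
    intro x k; rw [hωa]
    rw [Finset.sum_eq_single k]
    · simp
    · intro l _ hl; simp [hl]
    · simp
  have hdω : ∀ x u v, fderiv ℝ ω x u v =
      ∑ k, ∑ j, u j * v k * fderiv ℝ (theta b A k) x (Pi.single j 1) := by
    intro x u v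
    have : HasFDerivAt ω (∑ k, (fderiv ℝ (theta b A k) x).smulRight
        (ContinuousLinearMap.proj k : (Fin m → ℝ) →L[ℝ] ℝ)) x :=
      HasFDerivAt.fun_sum fun k _ =>
        HasFDerivAt.smul_const
          (((contDiff_theta b A hA k).differentiable (by simp) x).hasFDerivAt)
          (ContinuousLinearMap.proj k : (Fin m → ℝ) →L[ℝ] ℝ)
    rw [this.fderiv]
    simp only [_root_.sum_apply, ContinuousLinearMap.smulRight_apply,
      _root_.smul_apply, ContinuousLinearMap.proj_apply, smul_eq_mul]
    refine Finset.sum_congr rfl fun k _ => ?_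
    rw [clm_apply_sum, Finset.sum_mul]
    refine Finset.sum_congr rfl fun j _ => by ring
  obtain ⟨Φ, hΦ⟩ := (convex_ball (0 : Fin m → ℝ) r).exists_forall_hasFDerivAt_of_fderiv_symmetric
    Metric.isOpen_ball (ω := ω) (hωs.differentiable (by simp)).differentiableOn (by
      intro x hx u v
      rw [hdω, hdω, Finset.sum_comm]
      refine Finset.sum_congr rfl fun k _ => Finset.sum_congr rfl fun j _ => ?_
      rw [theta_symm b A hA r hA0 hsymm hcomp k j x hx]
      ring)
  have h0 : (0 : Fin m → ℝ) ∈ Metric.ball 0 r := Metric.mem_ball_self hr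
  have hΦ' : ∀ x ∈ Metric.ball (0 : Fin m → ℝ) r, HasFDerivAt (fun y => Φ y - Φ 0) (ω x) x :=
    fun x hx => (hΦ x hx).sub_const _
  refine ⟨fun x => Φ x - Φ 0, ?_, ?_, ?_⟩
  · rw [contDiffOn_infty_iff_fderiv_of_isOpen Metric.isOpen_ball]
    refine ⟨fun x hx => (hΦ' x hx).differentiableAt.differentiableWithinAt, ?_⟩
    exact hωs.contDiffOn.congr fun x hx => (hΦ' x hx).fderiv
  · intro i x hx hxi
    have := eq_of_dir_zero (fun x => Φ x - Φ 0) _ (convex_ball 0 r)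
      (fun z hz => (hΦ' z hz).differentiableAt) h0 hx ?_
    · simpa using this
    · intro z hz
      rw [(hΦ' z ((convex_ball 0 r).segment_subset h0 hx hz)).fderiv, hωa]
      refine Finset.sum_eq_zero fun k _ => ?_
      by_cases hk : b k = i
      · rw [theta_zero b A hA0 k z, zero_mul]
        intro l hl
        rw [hk] at hl
        obtain ⟨s, t, _, _, _, rfl⟩ := hz
        simp [hxi l hl]
      · simp [hxi k hk]
  · intro k x hx
    rw [(hΦ' x hx).fderiv, hω1]

/-- Given prescribed smooth positive boundary data `g i` along the
coordinate subspaces `F_i` (agreeing at `0`) and a prescribed nonuniformity tensor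
`A` (symmetric, cross-block, compatible), there is a unique germ of a smooth positive
density `h` with these restrictions and `∂²(log h)/∂x_k∂x_l = A_{kl}` for all cross-block
pairs. -/
theorem stmt7 {m n : ℕ} (hm : 2 ≤ m) (hn : 2 ≤ n)
    (B : Fin n → Finset (Fin m))
    (hBne : ∀ i, (B i).Nonempty)
    (hBdisj : ∀ i j, i ≠ j → Disjoint (B i) (B j))
    (hBcover : ∀ k, ∃ i, k ∈ B i)
    (g : ∀ i : Fin n, (↥(B i) → ℝ) → ℝ)
    (W : ∀ i : Fin n, Set (↥(B i) → ℝ))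
    (hWopen : ∀ i, IsOpen (W i)) (hW0 : ∀ i, (0 : ↥(B i) → ℝ) ∈ W i)
    (hgsm : ∀ i, ContDiffOn ℝ (⊤ : ℕ∞) (g i) (W i))
    (hgpos : ∀ i, ∀ y ∈ W i, 0 < g i y)
    (hg0 : ∀ i j : Fin n, g i 0 = g j 0)
    (A : Fin m → Fin m → (Fin m → ℝ) → ℝ)
    (VA : Set (Fin m → ℝ)) (hVA : IsOpen VA) (h0VA : (0 : Fin m → ℝ) ∈ VA)
    (hAsm : ∀ k l : Fin m, (¬ ∃ s : Fin n, k ∈ B s ∧ l ∈ B s) →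
      ContDiffOn ℝ (⊤ : ℕ∞) (A k l) VA)
    (hAsymm : ∀ k l : Fin m, (¬ ∃ s : Fin n, k ∈ B s ∧ l ∈ B s) →
      ∀ x ∈ VA, A k l x = A l k x)
    (hAcompat : ∀ a b c : Fin m,
      (¬ ∃ s : Fin n, a ∈ B s ∧ c ∈ B s) → (¬ ∃ s : Fin n, b ∈ B s ∧ c ∈ B s) →
      ∀ x ∈ VA, pd (A b c) a x = pd (A a c) b x) :
    ∃ (U : Set (Fin m → ℝ)) (h : (Fin m → ℝ) → ℝ),
      IsOpen U ∧ (0 : Fin m → ℝ) ∈ U ∧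
      ContDiffOn ℝ (⊤ : ℕ∞) h U ∧ (∀ x ∈ U, 0 < h x) ∧
      (∀ i : Fin n, ∀ x ∈ U, (∀ k, k ∉ B i → x k = 0) →
        h x = g i (fun k : ↥(B i) => x k.1)) ∧
      (∀ k l : Fin m, (¬ ∃ s : Fin n, k ∈ B s ∧ l ∈ B s) →
        ∀ x ∈ U, logpd2 h k l x = A k l x) ∧
      (∀ (U' : Set (Fin m → ℝ)) (h' : (Fin m → ℝ) → ℝ),
        IsOpen U' → (0 : Fin m → ℝ) ∈ U' →
        ContDiffOn ℝ (⊤ : ℕ∞) h' U' → (∀ x ∈ U', 0 < h' x) →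
        (∀ i : Fin n, ∀ x ∈ U', (∀ k, k ∉ B i → x k = 0) →
          h' x = g i (fun k : ↥(B i) => x k.1)) →
        (∀ k l : Fin m, (¬ ∃ s : Fin n, k ∈ B s ∧ l ∈ B s) →
          ∀ x ∈ U', logpd2 h' k l x = A k l x) →
        ∃ U'' : Set (Fin m → ℝ), IsOpen U'' ∧ (0 : Fin m → ℝ) ∈ U'' ∧
          ∀ x ∈ U'', h x = h' x) := by
  choose b hbm using hBcover
  have hb : ∀ k s, k ∈ B s ↔ b k = s := by
    intro k s
    constructor
    · intro h
      by_contra hne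
      exact Finset.disjoint_left.1 (hBdisj _ _ hne) (hbm k) h
    · rintro rfl; exact hbm k
  have hcross : ∀ k l, (¬ ∃ s : Fin n, k ∈ B s ∧ l ∈ B s) ↔ b k ≠ b l := by
    intro k l
    simp only [hb]
    constructor
    · intro h h'; exact h ⟨b k, rfl, h'.symm⟩
    · rintro h ⟨s, h1, h2⟩; exact h (h1.trans h2.symm)
  simp only [hcross] at hAsm hAsymm hAcompat ⊢
  have hFi : ∀ (i : Fin n) (x : Fin m → ℝ),
      (∀ k, k ∉ B i → x k = 0) ↔ (∀ k, b k ≠ i → x k = 0) := by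
    intro i x; simp only [hb, ne_eq]
  simp only [hFi]
  -- radius
  let π : ∀ i : Fin n, (Fin m → ℝ) → (↥(B i) → ℝ) := fun i x k => x k.1
  have hπ : ∀ i, ContDiff ℝ (⊤ : ℕ∞) (π i) := by
    intro i; rw [contDiff_pi]; intro k; fun_prop
  have hnb : (VA ∩ ⋂ i, π i ⁻¹' W i) ∈ nhds (0 : Fin m → ℝ) := by
    refine Filter.inter_mem (hVA.mem_nhds h0VA) (Filter.iInter_mem.2 fun i => ?_)
    exact ((hWopen i).preimage (hπ i).continuous).mem_nhds (hW0 i)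
  obtain ⟨ε, hε, hεs⟩ := Metric.mem_nhds_iff.1 hnb
  set r := ε / 3 with hrdef
  have hr : 0 < r := by positivity
  have hrV : Metric.closedBall (0 : Fin m → ℝ) (2 * r) ⊆ VA := fun x hx =>
    (hεs (Metric.closedBall_subset_ball (by rw [hrdef]; linarith) hx)).1
  have hbV : Metric.ball (0 : Fin m → ℝ) r ⊆ VA := fun x hx =>
    (hεs (Metric.ball_subset_ball (by rw [hrdef]; linarith) hx)).1
  have hbW : ∀ x ∈ Metric.ball (0 : Fin m → ℝ) r, ∀ i, π i x ∈ W i := fun x hx i =>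
    Set.mem_iInter.1 (hεs (Metric.ball_subset_ball (by rw [hrdef]; linarith) hx)).2 i
  have hex : ∀ k l, ∃ F : (Fin m → ℝ) → ℝ, ContDiff ℝ (⊤ : ℕ∞) F ∧ (b k = b l → F = 0) ∧
      (b k ≠ b l → ∀ x ∈ Metric.ball 0 r, F x = A k l x) := by
    intro k l
    by_cases h : b k = b l
    · exact ⟨0, contDiff_const, fun _ => rfl, fun h' => absurd h h'⟩
    · obtain ⟨F, hF, hF'⟩ := exists_global (A k l) VA hVA r hr hrV (hAsm k l h)
      exact ⟨F, hF, fun h' => absurd h' h, fun _ => hF'⟩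
  choose C hCs hC0 hCA using hex
  have hCsymm : ∀ k l, ∀ x ∈ Metric.ball (0 : Fin m → ℝ) r, C k l x = C l k x := by
    intro k l x hx
    by_cases h : b k = b l
    · rw [hC0 k l h, hC0 l k h.symm]
    · rw [hCA k l h x hx, hCA l k (Ne.symm h) x hx, hAsymm k l h x (hbV hx)]
  have hCpd : ∀ k l j, b k ≠ b l → ∀ x ∈ Metric.ball (0 : Fin m → ℝ) r,
      pd (C k l) j x = pd (A k l) j x := by
    intro k l j h x hx
    have : C k l =ᶠ[nhds x] A k l := by
      filter_upwards [Metric.isOpen_ball.mem_nhds hx] with y hy using hCA k l h y hy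
    unfold pd
    rw [this.fderiv_eq]
  have hCcomp : ∀ a c d, b a ≠ b d → b c ≠ b d → ∀ x ∈ Metric.ball (0 : Fin m → ℝ) r,
      pd (C c d) a x = pd (C a d) c x := by
    intro a c d h1 h2 x hx
    rw [hCpd c d a h2 x hx, hCpd a d c h1 x hx]
    exact hAcompat a c d h1 h2 x (hbV hx)
  obtain ⟨Φ, hΦs, hΦ0, hΦd⟩ := exists_phi b C hCs r hr hC0 hCsymm hCcomp
  -- boundary terms
  let L : Fin n → (Fin m → ℝ) → ℝ := fun i x => Real.log (g i (π i x))
  have hLs : ∀ i, ContDiffOn ℝ (⊤ : ℕ∞) (L i) (Metric.ball 0 r) := by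
    intro i
    refine ContDiffOn.log ((hgsm i).comp (hπ i).contDiffOn fun x hx => hbW x hx i) ?_
    intro x hx
    exact (hgpos i _ (hbW x hx i)).ne'
  have hLinv : ∀ i l, b l ≠ i → ∀ y (t : ℝ), L i (y + t • Pi.single l 1) = L i y := by
    intro i l hl y t
    have : π i (y + t • Pi.single l 1) = π i y := by
      ext ⟨k, hk⟩
      have : k ≠ l := by rintro rfl; exact hl ((hb _ _).1 hk)
      simp [π, this]
    simp only [L, this]
  have hL2 : ∀ i k l, b k ≠ b l → ∀ x,
      fderiv ℝ (fun y => fderiv ℝ (L i) y (Pi.single k 1)) x (Pi.single l 1) = 0 := by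
    intro i k l hkl x
    by_cases hl : b l = i
    · have hk : b k ≠ i := by rw [← hl]; exact hkl
      have : (fun y => fderiv ℝ (L i) y (Pi.single k 1)) = fun _ => 0 := by
        funext y
        exact fderiv_invariant _ _ _ (Filter.Eventually.of_forall fun t => hLinv i k hk y t)
      rw [this]; simp
    · refine fderiv_invariant _ _ _ (Filter.Eventually.of_forall fun t => ?_)
      have : (fun y => L i (y + t • Pi.single l 1)) = L i := funext fun y => hLinv i l hl y t
      have h2 := fderiv_comp_add_right (𝕜 := ℝ) (f := L i) (x := x)
        (t • (Pi.single l 1 : Fin m → ℝ))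
      rw [this] at h2
      simp only [h2]
  let i0 : Fin n := ⟨0, by omega⟩
  let c : ℝ := Real.log (g i0 0)
  let f : (Fin m → ℝ) → ℝ := fun x => (∑ i, L i x + Φ x) - ((n : ℝ) - 1) * c
  have hfs : ContDiffOn ℝ (⊤ : ℕ∞) f (Metric.ball 0 r) :=
    ((ContDiffOn.sum fun i _ => hLs i).add hΦs).sub contDiffOn_const
  have hdiff : ∀ (u : (Fin m → ℝ) → ℝ), ContDiffOn ℝ (⊤ : ℕ∞) u (Metric.ball 0 r) →
      ∀ x ∈ Metric.ball (0 : Fin m → ℝ) r, DifferentiableAt ℝ u x := fun u hu x hx =>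
    (hu.contDiffAt (Metric.isOpen_ball.mem_nhds hx)).differentiableAt (by simp)
  have hdiff2 : ∀ (u : (Fin m → ℝ) → ℝ) (R : ℝ) (v : Fin m → ℝ),
      ContDiffOn ℝ (⊤ : ℕ∞) u (Metric.ball 0 R) →
      ∀ x ∈ Metric.ball (0 : Fin m → ℝ) R,
        DifferentiableAt ℝ (fun y => fderiv ℝ u y v) x := by
    intro u R v hu z hz
    have := (((contDiffOn_infty_iff_fderiv_of_isOpen Metric.isOpen_ball).1 hu).2.contDiffAt
      (Metric.isOpen_ball.mem_nhds hz)).differentiableAt (by simp)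
    exact this.clm_apply (differentiableAt_const _)
  have hf1 : ∀ k, ∀ x ∈ Metric.ball (0 : Fin m → ℝ) r, fderiv ℝ f x (Pi.single k 1) =
      ∑ i, fderiv ℝ (L i) x (Pi.single k 1) + theta b C k x := by
    intro k x hx
    have : HasFDerivAt f (∑ i, fderiv ℝ (L i) x + fderiv ℝ Φ x) x :=
      ((HasFDerivAt.fun_sum fun i _ => (hdiff _ (hLs i) x hx).hasFDerivAt).add
        (hdiff _ hΦs x hx).hasFDerivAt).sub_const _
    rw [this.fderiv, _root_.add_apply, _root_.sum_apply, hΦd k x hx]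
  have hf2 : ∀ k l, b k ≠ b l → ∀ x ∈ Metric.ball (0 : Fin m → ℝ) r,
      fderiv ℝ (fun y => fderiv ℝ f y (Pi.single k 1)) x (Pi.single l 1) = A k l x := by
    intro k l hkl x hx
    have he : (fun y => fderiv ℝ f y (Pi.single k 1)) =ᶠ[nhds x]
        fun y => ∑ i, fderiv ℝ (L i) y (Pi.single k 1) + theta b C k y := by
      filter_upwards [Metric.isOpen_ball.mem_nhds hx] with y hy using hf1 k y hy
    rw [he.fderiv_eq]
    have : HasFDerivAt (fun y => ∑ i, fderiv ℝ (L i) y (Pi.single k 1) + theta b C k y)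
        (∑ i, fderiv ℝ (fun y => fderiv ℝ (L i) y (Pi.single k 1)) x +
          fderiv ℝ (theta b C k) x) x :=
      (HasFDerivAt.fun_sum fun i _ => (hdiff2 _ r _ (hLs i) x hx).hasFDerivAt).add
        ((contDiff_theta b C hCs k).differentiable (by simp) x).hasFDerivAt
    rw [this.fderiv, _root_.add_apply, _root_.sum_apply,
      theta_cross b C hCs r hC0 hCsymm hCcomp k l hkl x hx, hCA k l hkl x hx,
      Finset.sum_eq_zero fun i _ => hL2 i k l hkl x, zero_add]
  have hbd : ∀ i : Fin n, ∀ x ∈ Metric.ball (0 : Fin m → ℝ) r, (∀ k, b k ≠ i → x k = 0) →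
      Real.exp (f x) = g i (fun k : ↥(B i) => x k.1) := by
    intro i x hx hxi
    have h1 : ∀ j ∈ Finset.univ.erase i, L j x = c := by
      intro j hj
      have hji : j ≠ i := (Finset.mem_erase.1 hj).1
      have : π j x = 0 := by
        ext ⟨k, hk⟩
        refine hxi k ?_
        rw [(hb _ _).1 hk]; exact hji
      simp only [L, this, c, hg0 j i0]
    have h2 : f x = L i x := by
      simp only [f]
      rw [hΦ0 i x hx hxi, ← Finset.add_sum_erase _ _ (Finset.mem_univ i),
        Finset.sum_congr rfl h1, Finset.sum_const, Finset.card_erase_of_mem (Finset.mem_univ i),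
        Finset.card_univ, Fintype.card_fin, nsmul_eq_mul, Nat.cast_sub (by omega)]
      push_cast
      ring
    rw [h2]
    exact Real.exp_log (hgpos i _ (hbW x hx i))
  refine ⟨Metric.ball 0 r, fun x => Real.exp (f x), Metric.isOpen_ball, Metric.mem_ball_self hr,
    hfs.exp, fun x _ => Real.exp_pos _, hbd, ?_, ?_⟩
  · intro k l hkl x hx
    unfold logpd2
    simp only [Real.log_exp]
    exact hf2 k l hkl x hx
  · intro U' h' hU' h0U' hs' hpos' hbd' hpd'
    obtain ⟨δ, hδ, hδU⟩ := Metric.isOpen_iff.1 hU' 0 h0U'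
    let R := min r δ
    have hR : 0 < R := lt_min hr hδ
    have hRr : Metric.ball (0 : Fin m → ℝ) R ⊆ Metric.ball 0 r :=
      Metric.ball_subset_ball (min_le_left _ _)
    have hRU : Metric.ball (0 : Fin m → ℝ) R ⊆ U' :=
      (Metric.ball_subset_ball (min_le_right _ _)).trans hδU
    let f' : (Fin m → ℝ) → ℝ := fun z => Real.log (h' z)
    have hf's : ContDiffOn ℝ (⊤ : ℕ∞) f' (Metric.ball 0 R) :=
      (hs'.mono hRU).log fun x hx => (hpos' x (hRU hx)).ne'
    have hfR := hfs.mono hRr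
    refine ⟨Metric.ball 0 R, Metric.isOpen_ball, Metric.mem_ball_self hR, ?_⟩
    have key := uniq_aux b (fun x => f x - f' x) R hR (by omega) (hfR.sub hf's) ?_ ?_
    · intro x hx
      have h1 : f x = f' x := by have := key x hx; linarith
      simp only [h1, f']
      exact Real.exp_log (hpos' x (hRU hx))
    · intro i x hx hxi
      have h1 := hbd i x (hRr hx) hxi
      rw [← hbd' i x (hRU hx) hxi] at h1
      simp only [f', ← h1, Real.log_exp, sub_self]
    · intro k l hkl x hx
      have hd : ∀ (u : (Fin m → ℝ) → ℝ), ContDiffOn ℝ (⊤ : ℕ∞) u (Metric.ball 0 R) →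
          ∀ x ∈ Metric.ball (0 : Fin m → ℝ) R, DifferentiableAt ℝ u x := fun u hu x hx =>
        (hu.contDiffAt (Metric.isOpen_ball.mem_nhds hx)).differentiableAt (by simp)
      have he : (fun y => fderiv ℝ (fun x => f x - f' x) y (Pi.single k 1)) =ᶠ[nhds x]
          fun y => fderiv ℝ f y (Pi.single k 1) - fderiv ℝ f' y (Pi.single k 1) := by
        filter_upwards [Metric.isOpen_ball.mem_nhds hx] with y hy
        rw [fderiv_fun_sub (hd _ hfR y hy) (hd _ hf's y hy)]
        rfl
      rw [he.fderiv_eq, fderiv_fun_sub (hdiff2 _ R _ hfR x hx) (hdiff2 _ R _ hf's x hx)]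
      have h1 := hf2 k l hkl x (hRr hx)
      have h2 : fderiv ℝ (fun y => fderiv ℝ f' y (Pi.single k 1)) x (Pi.single l 1) = A k l x :=
        hpd' k l hkl x (hRU hx)
      rw [_root_.sub_apply, h1, h2, sub_self]
end
end

section
/- Let m ≥ 2 and let B_1,…,B_n (n ≥ 2) be a partition of {1,…,m} into nonempty blocks, and for each i let F_i = {x ∈ ℝ^m : x_k = 0 for all k ∉ B_i}. Let h be a smooth positive function on a neighborhood of 0 in ℝ^m. Then there exist a neighborhood U of 0 and a smooth diffeomorphism ψ from U onto an open subset of ℝ^m, of block-product form ψ(y) = (ψ_1(y_{B_1}),…,ψ_n(y_{B_n})) with ψ(0) = 0, such that the transformed density ĥ(y) := h(ψ(y))·∏_{i=1}^n |det Dψ_i(y_{B_i})| equals 1 at every point y ∈ U lying in F_1 ∪ … ∪ F_n. -/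
open MeasureTheory
noncomputable section

/-- Determinant of the Jacobian of the block map `ψ_i`. -/
def blockDet {m n : ℕ} (B : Fin n → Finset (Fin m)) (ψ : (Fin m → ℝ) → (Fin m → ℝ))
    (i : Fin n) (x : Fin m → ℝ) : ℝ :=
  Matrix.det (Matrix.of fun a k : ↥(B i) =>
    fderiv ℝ (fun z => ψ z a.1) x (Pi.single k.1 (1:ℝ)))

lemma hasFDerivAt_paramInt {E F : Type} [NormedAddCommGroup E] [NormedSpace ℝ E] [ProperSpace E]
    [NormedAddCommGroup F] [NormedSpace ℝ F] (f : E × ℝ → F) (hf : ContDiff ℝ 1 f) (x : E) :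
    HasFDerivAt (fun x => ∫ t in (0:ℝ)..1, f (x, t))
      (∫ t in (0:ℝ)..1, (fderiv ℝ f (x, t)).comp (ContinuousLinearMap.inl ℝ E ℝ)) x := by
  have hc : Continuous (fun p : E × ℝ => (fderiv ℝ f p).comp (ContinuousLinearMap.inl ℝ E ℝ)) :=
    (hf.continuous_fderiv (by simp)).clm_comp continuous_const
  obtain ⟨C, hC⟩ := ((isCompact_closedBall x 1).prod (isCompact_Icc (a := (0:ℝ)) (b := 1))
    ).exists_bound_of_continuousOn hc.continuousOn
  refine intervalIntegral.hasFDerivAt_integral_of_dominated_of_fderiv_le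
    (F' := fun x t => (fderiv ℝ f (x, t)).comp (ContinuousLinearMap.inl ℝ E ℝ))
    (bound := fun _ => C) (s := Metric.closedBall x 1) (Metric.closedBall_mem_nhds x one_pos)
    ?_ ?_ ?_ ?_ ?_ ?_
  · refine Filter.Eventually.of_forall fun y => ?_
    exact (hf.continuous.comp (by fun_prop : Continuous fun t : ℝ => (y, t))).aestronglyMeasurable
  · exact (hf.continuous.comp (by fun_prop : Continuous fun t : ℝ => (x, t))).intervalIntegrable _ _
  · exact (hc.comp (by fun_prop : Continuous fun t : ℝ => (x, t))).aestronglyMeasurable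
  · refine Filter.Eventually.of_forall fun t ht y hy => hC (y, t) ⟨hy, ?_⟩
    rw [Set.uIoc_of_le zero_le_one] at ht
    exact ⟨ht.1.le, ht.2⟩
  · simp
  · refine Filter.Eventually.of_forall fun t ht y hy => ?_
    have h1 : HasFDerivAt f (fderiv ℝ f (y, t)) (y, t) :=
      (hf.differentiable (by simp) _).hasFDerivAt
    have h2 : HasFDerivAt (fun z : E => (z, t)) (ContinuousLinearMap.inl ℝ E ℝ) y :=
      hasFDerivAt_prodMk_left y t
    exact h1.comp y h2

lemma contDiff_paramInt_nat {E : Type} [NormedAddCommGroup E] [NormedSpace ℝ E] [ProperSpace E]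
    (k : ℕ) : ∀ {F : Type} [NormedAddCommGroup F] [NormedSpace ℝ F] (f : E × ℝ → F),
      ContDiff ℝ k f → ContDiff ℝ k (fun x => ∫ t in (0:ℝ)..1, f (x, t)) := by
  induction k with
  | zero =>
    intro F _ _ f hf
    have hf' := hf.continuous
    refine contDiff_zero.2 ?_
    exact intervalIntegral.continuous_parametric_intervalIntegral_of_continuous'
      (f := fun x t => f (x, t)) hf' 0 1
  | succ k ih =>
    intro F _ _ f hf
    have h1 : ContDiff ℝ 1 f := hf.of_le (by norm_cast; omega)
    push_cast at hf ⊢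
    refine contDiff_succ_iff_hasFDerivAt.2 ⟨_, ?_, hasFDerivAt_paramInt f h1⟩
    apply ih (fun p : E × ℝ => (fderiv ℝ f p).comp (ContinuousLinearMap.inl ℝ E ℝ))
    exact (hf.fderiv_right le_rfl).clm_comp contDiff_const

/-- The primitive of `g` in direction `k`. -/
def prim {m : ℕ} (g : (Fin m → ℝ) → ℝ) (k : Fin m) (x : Fin m → ℝ) : ℝ :=
  x k * ∫ t in (0:ℝ)..1, g (x + Pi.single k ((t - 1) * x k))

lemma prim_contDiff {m : ℕ} (g : (Fin m → ℝ) → ℝ) (hg : ContDiff ℝ (⊤ : ℕ∞) g) (k : Fin m) :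
    ContDiff ℝ (⊤ : ℕ∞) (prim g k) := by
  unfold prim
  refine ContDiff.mul (by fun_prop) ?_
  rw [contDiff_infty]
  intro j
  refine contDiff_paramInt_nat j
    (fun p : (Fin m → ℝ) × ℝ => g (p.1 + Pi.single k ((p.2 - 1) * p.1 k))) ?_
  refine (hg.of_le (by exact_mod_cast le_top)).comp ?_
  have : (fun p : (Fin m → ℝ) × ℝ => p.1 + (Pi.single k ((p.2 - 1) * p.1 k) : Fin m → ℝ)) =
    fun p => p.1 + ((p.2 - 1) * p.1 k) • (Pi.single k (1:ℝ) : Fin m → ℝ) := by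
    ext p a
    by_cases h : a = k
    · subst h; simp
    · simp [h]
  rw [this]
  fun_prop

lemma prim_zero {m : ℕ} (g : (Fin m → ℝ) → ℝ) (k : Fin m) : prim g k 0 = 0 := by simp [prim]

lemma prim_fderiv {m : ℕ} (g : (Fin m → ℝ) → ℝ) (hg : ContDiff ℝ (⊤ : ℕ∞) g) (k : Fin m)
    (x : Fin m → ℝ) : fderiv ℝ (prim g k) x (Pi.single k 1) = g x := by
  have hd : DifferentiableAt ℝ (prim g k) x := (prim_contDiff g hg k).differentiable (by simp) x
  have h1 : HasDerivAt (fun s : ℝ => x + s • (Pi.single k (1:ℝ) : Fin m → ℝ))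
      (Pi.single k (1:ℝ)) 0 := by
    simpa using ((hasDerivAt_id (0:ℝ)).smul_const (Pi.single k (1:ℝ) : Fin m → ℝ)).const_add x
  have h2 : HasDerivAt (fun s : ℝ => prim g k (x + s • (Pi.single k (1:ℝ) : Fin m → ℝ)))
      (fderiv ℝ (prim g k) x (Pi.single k 1)) 0 := by
    have h3 : HasFDerivAt (prim g k) (fderiv ℝ (prim g k) x)
      (x + (0:ℝ) • (Pi.single k (1:ℝ) : Fin m → ℝ)) := by simpa using hd.hasFDerivAt
    exact h3.comp_hasDerivAt (0:ℝ) h1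
  let G : ℝ → ℝ := fun u => g (x + (u - x k) • (Pi.single k (1:ℝ) : Fin m → ℝ))
  have hG : Continuous G := hg.continuous.comp (by fun_prop)
  have h4 : (fun s : ℝ => prim g k (x + s • (Pi.single k (1:ℝ) : Fin m → ℝ))) =
      fun s => ∫ u in (0:ℝ)..(x k + s), G u := by
    ext s
    have := intervalIntegral.mul_integral_comp_mul_left (f := G) (a := 0) (b := 1) (c := x k + s)
    simp only [mul_zero, mul_one] at this
    rw [← this]
    unfold prim
    congr 1
    · simp
    · congr 1
      ext t
      simp only [G]
      congr 1
      ext a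
      by_cases h : a = k
      · subst h; simp; ring
      · simp [h]
  have h5 : HasDerivAt (fun s => ∫ u in (0:ℝ)..(x k + s), G u) (G (x k + 0)) 0 := by
    have h6 := intervalIntegral.integral_hasDerivAt_right (hG.intervalIntegrable 0 (x k + 0))
      (hG.stronglyMeasurableAtFilter _ _) hG.continuousAt
    exact h6.comp_const_add (x k) 0
  rw [h4] at h2
  rw [h2.unique h5]
  simp [G]

lemma det_row {ι : Type*} [Fintype ι] [DecidableEq ι] (M : Matrix ι ι ℝ) (k : ι)
    (h : ∀ a, a ≠ k → ∀ b, M a b = (1 : Matrix ι ι ℝ) a b) : M.det = M k k := by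
  have : M = (1 : Matrix ι ι ℝ).updateRow k (M k) := by
    ext a b
    by_cases ha : a = k
    · subst ha; simp
    · simp [ha, h a ha]
  rw [this, ← Matrix.cramer_transpose_apply]
  simp

/-- Smooth global extension of a germ. -/
lemma exists_ext {m : ℕ} (h : (Fin m → ℝ) → ℝ)
    (V : Set (Fin m → ℝ)) (hV : IsOpen V) (h0V : (0 : Fin m → ℝ) ∈ V)
    (hsm : ContDiffOn ℝ (⊤ : ℕ∞) h V) :
    ∃ H : (Fin m → ℝ) → ℝ, ContDiff ℝ (⊤ : ℕ∞) H ∧ ∃ r > 0, Metric.ball 0 r ⊆ V ∧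
      ∀ x ∈ Metric.ball (0 : Fin m → ℝ) r, H x = h x := by
  obtain ⟨R, hR, hRV⟩ := Metric.isOpen_iff.1 hV 0 h0V
  let χ : ContDiffBump (0 : Fin m → ℝ) := ⟨R/4, R/2, by positivity, by linarith⟩
  refine ⟨fun x => χ x * h x, ?_, R/4, by positivity,
    (Metric.ball_subset_ball (by linarith)).trans hRV, ?_⟩
  · rw [contDiff_iff_contDiffAt]
    intro x
    by_cases hx : x ∈ V
    · exact χ.contDiffAt.mul (hsm.contDiffAt (hV.mem_nhds hx))
    · have : x ∈ (tsupport χ)ᶜ := by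
        intro h'
        rw [χ.tsupport_eq] at h'
        exact hx (hRV (Metric.closedBall_subset_ball (by simp [χ]; linarith) h'))
      have h2 : (fun x => χ x * h x) =ᶠ[nhds x] fun _ => 0 := by
        filter_upwards [(isClosed_tsupport χ).isOpen_compl.mem_nhds this] with y hy
        rw [image_eq_zero_of_notMem_tsupport hy, zero_mul]
      exact contDiffAt_const.congr_of_eventuallyEq h2
  · intro x hx
    have : χ x = 1 := χ.one_of_mem_closedBall (Metric.ball_subset_closedBall hx)
    simp [this]



/-- Projection to a block. -/
def bproj {m : ℕ} (S : Finset (Fin m)) : (Fin m → ℝ) →L[ℝ] (Fin m → ℝ) :=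
  ContinuousLinearMap.pi fun a => if a ∈ S then ContinuousLinearMap.proj a else 0

lemma bproj_apply {m : ℕ} (S : Finset (Fin m)) (x : Fin m → ℝ) (a : Fin m) :
    bproj S x a = if a ∈ S then x a else 0 := by
  unfold bproj
  simp only [ContinuousLinearMap.coe_pi']
  split_ifs <;> simp

lemma fderiv_eq_sum {m : ℕ} (A : (Fin m → ℝ) →L[ℝ] (Fin m → ℝ)) (v : Fin m → ℝ) (a : Fin m) :
    A v a = ∑ k, v k * A (Pi.single k 1) a := by
  have : v = ∑ k, v k • (Pi.single k (1:ℝ) : Fin m → ℝ) := by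
    ext b
    simp [Finset.sum_apply, Pi.single_apply]
  conv_lhs => rw [this]
  simp [map_sum, Finset.sum_apply]

lemma fderiv_coord {m : ℕ} (φ : (Fin m → ℝ) → (Fin m → ℝ)) (x : Fin m → ℝ)
    (hd : DifferentiableAt ℝ φ x) (a : Fin m) (v : Fin m → ℝ) :
    fderiv ℝ (fun z => φ z a) x v = fderiv ℝ φ x v a := by
  have := (hasFDerivAt_pi'.1 hd.hasFDerivAt a).fderiv
  rw [this]; simp

/-- Existence of the inverse map `φ`. -/
lemma exists_phi_s9 {m n : ℕ} (B : Fin n → Finset (Fin m))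
    (hBne : ∀ i, (B i).Nonempty)
    (hBdisj : ∀ i j, i ≠ j → Disjoint (B i) (B j))
    (hBcover : ∀ k, ∃ i, k ∈ B i)
    (H : (Fin m → ℝ) → ℝ) (hH : ContDiff ℝ (⊤ : ℕ∞) H) :
    ∃ φ : (Fin m → ℝ) → (Fin m → ℝ), ContDiff ℝ (⊤ : ℕ∞) φ ∧ φ 0 = 0 ∧
      (∀ i, ∀ a ∈ B i, ∀ x y : Fin m → ℝ, (∀ k ∈ B i, x k = y k) → φ x a = φ y a) ∧
      (∀ i x, ∀ a ∈ B i, ∀ k, k ∉ B i → fderiv ℝ φ x (Pi.single k 1) a = 0) ∧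
      (∀ i x, blockDet B φ i x = H (bproj (B i) x)) ∧
      (∀ x, (∀ i, H (bproj (B i) x) ≠ 0) →
        ∃ L : (Fin m → ℝ) ≃L[ℝ] (Fin m → ℝ),
          fderiv ℝ φ x = (L : (Fin m → ℝ) →L[ℝ] (Fin m → ℝ))) := by
  choose κ hκ using hBne
  choose blk hblk using hBcover
  have huniq : ∀ i k, k ∈ B i → blk k = i := by
    intro i k hk
    by_contra hne
    exact (Finset.disjoint_left.1 (hBdisj _ _ hne) (hblk k)) hk
  let g : Fin n → (Fin m → ℝ) → ℝ := fun i x => H (bproj (B i) x)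
  have hg : ∀ i, ContDiff ℝ (⊤ : ℕ∞) (g i) := fun i => hH.comp (bproj (B i)).contDiff
  let φ : (Fin m → ℝ) → (Fin m → ℝ) := fun x a =>
    if a = κ (blk a) then prim (g (blk a)) a x else x a
  have hφ : ContDiff ℝ (⊤ : ℕ∞) φ := by
    rw [contDiff_pi]
    intro a
    by_cases ha : a = κ (blk a)
    · simp only [φ, if_pos ha]; exact prim_contDiff _ (hg _) a
    · simp only [φ, if_neg ha]; fun_prop
  have hφd : Differentiable ℝ φ := hφ.differentiable (by simp)
  have hdep : ∀ i, ∀ a ∈ B i, ∀ x y : Fin m → ℝ, (∀ k ∈ B i, x k = y k) → φ x a = φ y a := by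
    intro i a ha x y hxy
    have hi := huniq i a ha
    simp only [φ]
    split_ifs with hk
    · unfold prim
      rw [hxy a ha]
      congr 2
      ext t
      simp only [g, hi]
      congr 1
      ext b
      simp only [bproj_apply]
      split_ifs with hb
      · simp [hxy b hb]
      · rfl
    · exact hxy a ha
  have hoff : ∀ i x, ∀ a ∈ B i, ∀ k, k ∉ B i → fderiv ℝ φ x (Pi.single k 1) a = 0 := by
    intro i x a ha k hk
    rw [← fderiv_coord φ x (hφd x)]
    have h1 : (fun z => φ z a) = (fun z => φ z a) ∘ (bproj (B i)) := by
      ext z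
      refine hdep i a ha _ _ fun k hk => ?_
      simp [bproj_apply, hk]
    have h2 : DifferentiableAt ℝ (fun z => φ z a) (bproj (B i) x) :=
      differentiableAt_pi.1 (hφd _) a
    rw [h1, fderiv_comp x h2 (bproj (B i)).differentiableAt]
    have h3 : bproj (B i) (Pi.single k 1) = 0 := by
      ext b
      rw [bproj_apply]
      split_ifs with hb
      · have : b ≠ k := by rintro rfl; exact hk hb
        simp [this]
      · rfl
    simp [h3]
  have hid : ∀ x a v, a ≠ κ (blk a) → fderiv ℝ φ x v a = v a := by
    intro x a v ha
    rw [← fderiv_coord φ x (hφd x)]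
    have : (fun z => φ z a) = fun z => ContinuousLinearMap.proj (R := ℝ) (φ := fun _ : Fin m => ℝ) a z := by
      ext z; simp [φ, if_neg ha]
    rw [this, ContinuousLinearMap.fderiv]; simp
  have hkk : ∀ x i, fderiv ℝ φ x (Pi.single (κ i) 1) (κ i) = g i x := by
    intro x i
    rw [← fderiv_coord φ x (hφd x)]
    have hi := huniq i _ (hκ i)
    have : (fun z => φ z (κ i)) = prim (g i) (κ i) := by
      ext z; simp [φ, hi]
    rw [this]
    exact prim_fderiv _ (hg i) _ _
  refine ⟨φ, hφ, ?_, hdep, hoff, ?_, ?_⟩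
  · ext a
    simp only [φ]
    split_ifs <;> simp [prim_zero]
  · intro i x
    unfold blockDet
    rw [det_row _ ⟨κ i, hκ i⟩]
    · rw [Matrix.of_apply, fderiv_coord φ x (hφd x)]
      exact hkk x i
    · rintro ⟨a, ha⟩ hne ⟨b, hb⟩
      have hi := huniq i a ha
      rw [Matrix.of_apply, fderiv_coord φ x (hφd x), hid]
      · simp [Matrix.one_apply, Pi.single_apply]
      · rw [hi]; intro h; exact hne (Subtype.ext h)
  · intro x hx
    have hinj : Function.Injective (fderiv ℝ φ x : (Fin m → ℝ) →ₗ[ℝ] (Fin m → ℝ)) := by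
      rw [← LinearMap.ker_eq_bot, LinearMap.ker_eq_bot']
      intro v hv
      have hv' : ∀ a, fderiv ℝ φ x v a = 0 := fun a => congrFun hv a
      have h1 : ∀ a, a ≠ κ (blk a) → v a = 0 := fun a ha => by rw [← hid x a v ha]; exact hv' a
      ext a
      by_cases ha : a = κ (blk a)
      · have h2 := hv' a
        rw [fderiv_eq_sum, Finset.sum_eq_single a] at h2
        · rw [ha, hkk] at h2
          rcases mul_eq_zero.1 h2 with h3 | h3
          · rw [ha]; simpa using h3
          · exact absurd h3 (hx _)
        · intro k _ hka
          by_cases hk : k ∈ B (blk a)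
          · rw [h1 k, zero_mul]
            rw [huniq _ _ hk, ← ha]; exact hka
          · rw [hoff (blk a) x a (hblk a) k hk, mul_zero]
        · simp
      · exact h1 a ha
    refine ⟨(LinearEquiv.ofInjectiveEndo _ hinj).toContinuousLinearEquiv, ?_⟩
    ext v
    rfl

theorem stmt9 {m n : ℕ} (hm : 2 ≤ m) (hn : 2 ≤ n)
    (B : Fin n → Finset (Fin m))
    (hBne : ∀ i, (B i).Nonempty)
    (hBdisj : ∀ i j, i ≠ j → Disjoint (B i) (B j))
    (hBcover : ∀ k, ∃ i, k ∈ B i)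
    (h : (Fin m → ℝ) → ℝ)
    (V : Set (Fin m → ℝ)) (hV : IsOpen V) (h0V : (0 : Fin m → ℝ) ∈ V)
    (hsm : ContDiffOn ℝ (⊤ : ℕ∞) h V) (hpos : ∀ x ∈ V, 0 < h x) :
    ∃ (U : Set (Fin m → ℝ)) (ψ : (Fin m → ℝ) → (Fin m → ℝ)),
      IsOpen U ∧ (0 : Fin m → ℝ) ∈ U ∧ ψ 0 = 0 ∧
      ContDiffOn ℝ (⊤ : ℕ∞) ψ U ∧ Set.InjOn ψ U ∧
      (∀ y ∈ U, ∃ L : (Fin m → ℝ) ≃L[ℝ] (Fin m → ℝ),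
        fderiv ℝ ψ y = (L : (Fin m → ℝ) →L[ℝ] (Fin m → ℝ))) ∧
      (∀ i : Fin n, ∀ a ∈ B i, ∀ y ∈ U, ∀ z ∈ U,
        (∀ k ∈ B i, y k = z k) → ψ y a = ψ z a) ∧
      (∀ y ∈ U, ψ y ∈ V) ∧
      (∀ y ∈ U, (∃ i : Fin n, ∀ k, k ∉ B i → y k = 0) →
        h (ψ y) * ∏ i, |blockDet B ψ i y| = 1) := by
  obtain ⟨H₀, hH₀, r, hr, hrV, hH₀h⟩ := exists_ext h V hV h0V hsm
  have hc : 0 < h 0 := hpos 0 h0V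
  obtain ⟨α, hα, hαn⟩ : ∃ α : ℝ, 0 < α ∧ α ^ n = h 0 ^ (n - 1) :=
    ⟨(h 0 ^ (n - 1)) ^ ((n : ℝ)⁻¹), by positivity,
      Real.rpow_inv_natCast_pow (by positivity) (by omega)⟩
  obtain ⟨φ, hφ, hφ0, hdep, hoff, hdet, hL⟩ := exists_phi_s9 B hBne hBdisj hBcover
    (fun x => H₀ x / α) (hH₀.div_const α)
  have hPball : ∀ s, ∀ x ∈ Metric.ball (0 : Fin m → ℝ) s, ∀ i,
      bproj (B i) x ∈ Metric.ball (0 : Fin m → ℝ) s := by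
    intro s x hx i
    rw [mem_ball_zero_iff] at hx ⊢
    refine lt_of_le_of_lt ?_ hx
    refine (pi_norm_le_iff_of_nonneg (norm_nonneg x)).2 fun a => ?_
    rw [bproj_apply]
    split_ifs
    · exact norm_le_pi_norm x a
    · simp
  have hne : ∀ x ∈ Metric.ball (0 : Fin m → ℝ) r, ∀ i, H₀ (bproj (B i) x) / α ≠ 0 := by
    intro x hx i
    have h1 := hPball r x hx i
    rw [hH₀h _ h1]
    exact (div_pos (hpos _ (hrV h1)) hα).ne'
  have hφd : Differentiable ℝ φ := hφ.differentiable (by simp)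
  obtain ⟨L₀, hL₀⟩ := hL 0 (hne 0 (Metric.mem_ball_self hr))
  have hF0 : HasFDerivAt φ (L₀ : (Fin m → ℝ) →L[ℝ] (Fin m → ℝ)) 0 := by
    rw [← hL₀]; exact (hφd 0).hasFDerivAt
  let e := hφ.contDiffAt.toOpenPartialHomeomorph φ hF0 (by simp)
  have he : ∀ x, e x = φ x := fun x => rfl
  have h0e : (0 : Fin m → ℝ) ∈ e.source :=
    hφ.contDiffAt.mem_toOpenPartialHomeomorph_source hF0 (by simp)
  obtain ⟨s, hs, hse⟩ := Metric.isOpen_iff.1 e.open_source 0 h0e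
  let ρ := min r s
  have hρ : 0 < ρ := lt_min hr hs
  let W := Metric.ball (0 : Fin m → ℝ) ρ
  have hWr : W ⊆ Metric.ball 0 r := Metric.ball_subset_ball (min_le_left _ _)
  have hWe : W ⊆ e.source := (Metric.ball_subset_ball (min_le_right _ _)).trans hse
  have h0W : (0 : Fin m → ℝ) ∈ W := Metric.mem_ball_self hρ
  let U := e '' W
  have hU : IsOpen U := e.isOpen_image_of_subset_source Metric.isOpen_ball hWe
  have hUt : U ⊆ e.target := by
    rintro _ ⟨x, hx, rfl⟩; exact e.map_source (hWe hx)
  have hψW : ∀ y ∈ U, e.symm y ∈ W := by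
    rintro _ ⟨x, hx, rfl⟩; rw [e.left_inv (hWe hx)]; exact hx
  have hφψ : ∀ y ∈ U, φ (e.symm y) = y := fun y hy => e.right_inv (hUt hy)
  have hψ0 : e.symm 0 = 0 := by
    have := e.left_inv h0e
    rwa [he, hφ0] at this
  have h0U : (0 : Fin m → ℝ) ∈ U := ⟨0, h0W, hφ0⟩
  have hder : ∀ y ∈ U, ∃ L : (Fin m → ℝ) ≃L[ℝ] (Fin m → ℝ),
      HasFDerivAt φ (L : (Fin m → ℝ) →L[ℝ] (Fin m → ℝ)) (e.symm y) ∧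
      HasFDerivAt e.symm (L.symm : (Fin m → ℝ) →L[ℝ] (Fin m → ℝ)) y := by
    intro y hy
    obtain ⟨L, hL'⟩ := hL (e.symm y) (hne _ (hWr (hψW y hy)))
    have h1 : HasFDerivAt φ (L : (Fin m → ℝ) →L[ℝ] (Fin m → ℝ)) (e.symm y) := by
      rw [← hL']; exact (hφd _).hasFDerivAt
    exact ⟨L, h1, e.hasFDerivAt_symm (hUt hy) h1⟩
  have hψdep : ∀ i : Fin n, ∀ a ∈ B i, ∀ y ∈ U, ∀ z ∈ U,
        (∀ k ∈ B i, y k = z k) → e.symm y a = e.symm z a := by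
    intro i a ha y hy z hz hyz
    let w : Fin m → ℝ := fun k => if k ∈ B i then e.symm y k else e.symm z k
    have hw : w ∈ W := by
      have h1 := hψW y hy
      have h2 := hψW z hz
      simp only [W, mem_ball_zero_iff] at h1 h2 ⊢
      rw [pi_norm_lt_iff hρ] at h1 h2 ⊢
      intro k
      simp only [w]
      split_ifs
      · exact h1 k
      · exact h2 k
    have h3 : φ w = φ (e.symm z) := by
      ext b
      by_cases hb : b ∈ B i
      · rw [hdep i b hb w (e.symm y) (fun k hk => by simp [w, hk]), hφψ y hy, hφψ z hz]
        exact hyz b hb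
      · obtain ⟨j, hj⟩ := hBcover b
        have hij : j ≠ i := by rintro rfl; exact hb hj
        refine hdep j b hj _ _ fun k hk => ?_
        have := Finset.disjoint_left.1 (hBdisj _ _ hij) hk
        simp [w, this]
    have h4 : w = e.symm z := e.injOn (hWe hw) (hWe (hψW z hz)) h3
    rw [← h4]
    simp [w, ha]
  refine ⟨U, e.symm, hU, h0U, hψ0, ?_, e.symm.injOn.mono hUt, ?_, hψdep,
    fun y hy => hrV (hWr (hψW y hy)), ?_⟩
  · intro y hy
    obtain ⟨L, hL1, hL2⟩ := hder y hy
    exact (e.contDiffAt_symm (hUt hy) hL1 hφ.contDiffAt).contDiffWithinAt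
  · intro y hy
    obtain ⟨L, hL1, hL2⟩ := hder y hy
    exact ⟨L.symm, hL2.fderiv⟩
  · rintro y hy ⟨i, hi⟩
    have hblock : ∀ j, blockDet B e.symm j y * (H₀ (bproj (B j) (e.symm y)) / α) = 1 := by
      intro j
      obtain ⟨L, hL1, hL2⟩ := hder y hy
      rw [← hdet j (e.symm y)]
      unfold blockDet
      rw [← Matrix.det_mul]
      refine (congrArg Matrix.det ?_).trans Matrix.det_one
      ext ⟨a, ha⟩ ⟨b, hb⟩
      rw [Matrix.mul_apply]
      simp only [Matrix.of_apply]
      simp only [fderiv_coord φ _ (hφd _), fderiv_coord e.symm y hL2.differentiableAt,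
        hL2.fderiv]
      have h1 := fderiv_eq_sum (L.symm : (Fin m → ℝ) →L[ℝ] (Fin m → ℝ))
        (fderiv ℝ φ (e.symm y) (Pi.single b 1)) a
      rw [← Finset.sum_subset (Finset.subset_univ (B j)), ← Finset.sum_coe_sort] at h1
      · rw [hL1.fderiv] at h1 ⊢
        simp only [ContinuousLinearEquiv.coe_coe, ContinuousLinearEquiv.symm_apply_apply] at h1 ⊢
        rw [show (1 : Matrix (B j) (B j) ℝ) ⟨a, ha⟩ ⟨b, hb⟩ = (Pi.single b (1:ℝ) : Fin m → ℝ) a by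
          simp [Matrix.one_apply, Pi.single_apply], h1]
        exact Finset.sum_congr rfl fun k _ => mul_comm _ _
      · intro k _ hk
        obtain ⟨l, hl⟩ := hBcover k
        have hlj : j ≠ l := by rintro rfl; exact hk hl
        rw [hoff l _ k hl b (Finset.disjoint_left.1 (hBdisj _ _ hlj) hb), zero_mul]
    have hx := hψW y hy
    set x := e.symm y with hxdef
    have hx0 : ∀ k, k ∉ B i → x k = 0 := by
      intro k hk
      obtain ⟨l, hl⟩ := hBcover k
      have hli : l ≠ i := by rintro rfl; exact hk hl
      have := hψdep l k hl y hy 0 h0U fun b hb =>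
        hi b (Finset.disjoint_left.1 (hBdisj _ _ hli) hb)
      rw [hψ0] at this
      exact this
    have hPi : bproj (B i) x = x := by
      ext a
      rw [bproj_apply]
      split_ifs with ha
      · rfl
      · exact (hx0 a ha).symm
    have hPj : ∀ j, j ≠ i → bproj (B j) x = 0 := by
      intro j hj
      ext a
      rw [bproj_apply]
      split_ifs with ha
      · exact hx0 a (Finset.disjoint_left.1 (hBdisj _ _ hj) ha)
      · rfl
    have hhx : 0 < h x := hpos x (hrV (hWr hx))
    have hval : ∀ j, |blockDet B e.symm j y| = if j = i then α / h x else α / h 0 := by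
      intro j
      have h1 := hblock j
      split_ifs with hj
      · rw [hj] at h1 ⊢
        rw [hPi, hH₀h x (hWr hx)] at h1
        have : blockDet B e.symm i y = α / h x := by
          field_simp at h1 ⊢; linarith
        rw [this, abs_of_pos (by positivity)]
      · rw [hPj j hj, hH₀h 0 (Metric.mem_ball_self hr)] at h1
        have : blockDet B e.symm j y = α / h 0 := by
          field_simp at h1 ⊢; linarith
        rw [this, abs_of_pos (by positivity)]
    simp only [hval]
    rw [← Finset.mul_prod_erase _ _ (Finset.mem_univ i)]
    rw [Finset.prod_congr rfl (g := fun _ => α / h 0)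
      (fun j hj => if_neg (Finset.ne_of_mem_erase hj)), Finset.prod_const,
      Finset.card_erase_of_mem (Finset.mem_univ i)]
    simp only [if_true, Finset.card_univ, Fintype.card_fin, div_pow]
    rw [← hαn]
    obtain ⟨k, rfl⟩ : ∃ k, n = k + 1 := ⟨n - 1, by omega⟩
    simp only [Nat.add_sub_cancel]
    field_simp
    ring
end
end

section
/- Let m ≥ 2 and let B_1,…,B_n (n ≥ 2) be a partition of {1,…,m} into nonempty blocks, and for each i let F_i = {x ∈ ℝ^m : x_k = 0 for all k ∉ B_i}. Let ψ be a smooth diffeomorphism from a neighborhood of 0 in ℝ^m onto an open subset of ℝ^m, of block-product form ψ(y) = (ψ_1(y_{B_1}),…,ψ_n(y_{B_n})) with ψ(0) = 0, such that ∏_{i=1}^n |det Dψ_i(y_{B_i})| = 1 at every point y near 0 lying in F_1 ∪ … ∪ F_n. Then each function y_{B_i} ↦ det Dψ_i(y_{B_i}) is constant on a neighborhood of 0, and ∏_{i=1}^n |det Dψ_i| = 1. -/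
open MeasureTheory

noncomputable section

theorem blockDet_congr_aux {m n : ℕ} (B : Fin n → Finset (Fin m))
    (ψ : (Fin m → ℝ) → (Fin m → ℝ))
    (U : Set (Fin m → ℝ)) (hU : IsOpen U)
    (hψblock : ∀ i : Fin n, ∀ a ∈ B i, ∀ y ∈ U, ∀ z ∈ U,
      (∀ k ∈ B i, y k = z k) → ψ y a = ψ z a)
    (i : Fin n) (y z : Fin m → ℝ) (hy : y ∈ U) (hz : z ∈ U)
    (h : ∀ k ∈ B i, y k = z k) : blockDet B ψ i y = blockDet B ψ i z := by
  unfold blockDet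
  congr 1
  ext a k
  simp only [Matrix.of_apply]
  have key : fderiv ℝ (fun w => ψ w a.1) y = fderiv ℝ (fun w => ψ w a.1) z := by
    have h1 : (fun w => ψ w a.1) =ᶠ[nhds y] fun w => ψ (w + (z - y)) a.1 := by
      have e1 : ∀ᶠ w in nhds y, w ∈ U := hU.mem_nhds hy
      have hc : ContinuousAt (fun w : Fin m → ℝ => w + (z - y)) y := by fun_prop
      have e2 : ∀ᶠ w in nhds y, w + (z - y) ∈ U := by
        apply hc.eventually
        apply hU.mem_nhds
        simpa using hz
      filter_upwards [e1, e2] with w h1 h2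
      refine hψblock i a.1 a.2 _ h1 _ h2 fun k hk => ?_
      simp [h k hk]
    rw [h1.fderiv_eq, fderiv_comp_add_right (f := fun w => ψ w a.1) (z - y)]
    simp
  rw [key]

theorem blockDet_continuousAt_aux {m n : ℕ} (B : Fin n → Finset (Fin m))
    (ψ : (Fin m → ℝ) → (Fin m → ℝ)) (x : Fin m → ℝ)
    (h : ContDiffAt ℝ (⊤ : ℕ∞) ψ x) (i : Fin n) :
    ContinuousAt (blockDet B ψ i) x := by
  unfold blockDet
  have hd : ContinuousAt (fun A : Matrix (B i) (B i) ℝ => A.det)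
      (Matrix.of fun a k : ↥(B i) => fderiv ℝ (fun z => ψ z a.1) x (Pi.single k.1 (1:ℝ))) :=
    (Continuous.matrix_det continuous_id).continuousAt
  refine ContinuousAt.comp (g := fun A : Matrix (B i) (B i) ℝ => A.det)
    (f := fun x => Matrix.of fun a k : ↥(B i) =>
      fderiv ℝ (fun z => ψ z a.1) x (Pi.single k.1 (1:ℝ))) hd ?_
  refine continuousAt_pi.2 fun a => continuousAt_pi.2 fun k => ?_
  have h1 : ContDiffAt ℝ (⊤ : ℕ∞) (fun z => ψ z a.1) x := contDiffAt_pi.1 h a.1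
  have h2 : ContDiffAt ℝ 0 (fderiv ℝ (fun z => ψ z a.1)) x :=
    h1.fderiv_right (m := 0) (by norm_cast)
  exact h2.continuousAt.clm_apply continuousAt_const

/-- If a block-product diffeomorphism `ψ` fixing `0` satisfies
`∏ |det Dψ_i| = 1` at all points of `F_1 ∪ … ∪ F_n` near `0`, then each block Jacobian
determinant `det Dψ_i` is constant near `0` and `∏ |det Dψ_i| = 1` near `0`. -/
theorem stmt10 {m n : ℕ} (hm : 2 ≤ m) (hn : 2 ≤ n)
    (B : Fin n → Finset (Fin m))
    (hBne : ∀ i, (B i).Nonempty)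
    (hBdisj : ∀ i j, i ≠ j → Disjoint (B i) (B j))
    (hBcover : ∀ k, ∃ i, k ∈ B i)
    (ψ : (Fin m → ℝ) → (Fin m → ℝ))
    (U : Set (Fin m → ℝ)) (hU : IsOpen U) (h0U : (0 : Fin m → ℝ) ∈ U)
    (hψ0 : ψ 0 = 0)
    (hψsm : ContDiffOn ℝ (⊤ : ℕ∞) ψ U) (hψinj : Set.InjOn ψ U)
    (hψinv : ∀ y ∈ U, ∃ L : (Fin m → ℝ) ≃L[ℝ] (Fin m → ℝ),
      fderiv ℝ ψ y = (L : (Fin m → ℝ) →L[ℝ] (Fin m → ℝ)))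
    (hψblock : ∀ i : Fin n, ∀ a ∈ B i, ∀ y ∈ U, ∀ z ∈ U,
      (∀ k ∈ B i, y k = z k) → ψ y a = ψ z a)
    (hnorm : ∀ y ∈ U, (∃ i : Fin n, ∀ k, k ∉ B i → y k = 0) →
      ∏ i, |blockDet B ψ i y| = 1) :
    ∃ U' : Set (Fin m → ℝ), IsOpen U' ∧ (0 : Fin m → ℝ) ∈ U' ∧ U' ⊆ U ∧
      (∀ i : Fin n, ∀ y ∈ U', ∀ z ∈ U', blockDet B ψ i y = blockDet B ψ i z) ∧
      (∀ y ∈ U', ∏ i, |blockDet B ψ i y| = 1) := by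
  classical
  have hcont : ∀ i, ∀ᶠ y in nhds (0 : Fin m → ℝ), |blockDet B ψ i 0| ≠ 0 →
      |blockDet B ψ i y - blockDet B ψ i 0| < |blockDet B ψ i 0| := by
    intro i
    by_cases h : |blockDet B ψ i 0| = 0
    · simp [h]
    have hc := blockDet_continuousAt_aux B ψ 0 (hψsm.contDiffAt (hU.mem_nhds h0U)) i
    have hpos : 0 < |blockDet B ψ i 0| := lt_of_le_of_ne (abs_nonneg _) (Ne.symm h)
    filter_upwards [Metric.continuousAt_iff'.1 hc _ hpos] with y hy _
    simpa [Real.dist_eq] using hy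
  have hev : ∀ᶠ y in nhds (0 : Fin m → ℝ), y ∈ U ∧ ∀ i, |blockDet B ψ i 0| ≠ 0 →
      |blockDet B ψ i y - blockDet B ψ i 0| < |blockDet B ψ i 0| :=
    Filter.Eventually.and (hU.mem_nhds h0U) (Filter.eventually_all.2 hcont)
  obtain ⟨ε, hε, hball⟩ := Metric.eventually_nhds_iff_ball.1 hev
  have hn0 : 0 < n := by omega
  have hone : ∏ i, |blockDet B ψ i 0| = 1 := hnorm 0 h0U ⟨⟨0, hn0⟩, fun _ _ => rfl⟩
  have hne : ∀ i, |blockDet B ψ i 0| ≠ 0 := by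
    intro i
    exact (Finset.prod_ne_zero_iff.1 (by rw [hone]; exact one_ne_zero)) i (Finset.mem_univ i)
  have hcst : ∀ i, ∀ y ∈ Metric.ball (0 : Fin m → ℝ) ε,
      blockDet B ψ i y = blockDet B ψ i 0 := by
    intro i y hy
    set p : Fin m → ℝ := fun k => if k ∈ B i then y k else 0 with hp
    have hpb : p ∈ Metric.ball (0 : Fin m → ℝ) ε := by
      rw [mem_ball_zero_iff] at hy ⊢
      refine lt_of_le_of_lt ((pi_norm_le_iff_of_nonneg (norm_nonneg y)).2 fun k => ?_) hy
      by_cases hk : k ∈ B i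
      · simpa [hp, hk] using norm_le_pi_norm y k
      · simp [hp, hk]
    have hpU := (hball p hpb).1
    have hyU := (hball y hy).1
    have hpy : blockDet B ψ i y = blockDet B ψ i p :=
      blockDet_congr_aux B ψ U hU hψblock i y p hyU hpU fun k hk => by simp [hp, hk]
    have hpj : ∀ j, j ≠ i → blockDet B ψ j p = blockDet B ψ j 0 := fun j hj =>
      blockDet_congr_aux B ψ U hU hψblock j p 0 hpU h0U fun k hk => by
        have : k ∉ B i := Finset.disjoint_left.1 (hBdisj j i hj) hk
        simp [hp, this]
    have hprod := hnorm p hpU ⟨i, fun k hk => by simp [hp, hk]⟩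
    rw [← Finset.mul_prod_erase _ _ (Finset.mem_univ i)] at hprod
    have hone' := hone
    rw [← Finset.mul_prod_erase _ _ (Finset.mem_univ i)] at hone'
    have he : ∏ j ∈ Finset.univ.erase i, |blockDet B ψ j p|
        = ∏ j ∈ Finset.univ.erase i, |blockDet B ψ j 0| :=
      Finset.prod_congr rfl fun j hj => by rw [hpj j (Finset.ne_of_mem_erase hj)]
    rw [he, ← hpy] at hprod
    have hz : ∏ j ∈ Finset.univ.erase i, |blockDet B ψ j 0| ≠ 0 :=
      right_ne_zero_of_mul (hone' ▸ one_ne_zero)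
    have habs : |blockDet B ψ i y| = |blockDet B ψ i 0| :=
      mul_right_cancel₀ hz (hprod.trans hone'.symm)
    have hlt := (hball y hy).2 i (hne i)
    rcases abs_eq_abs.1 habs with h | h
    · exact h
    · exfalso
      rw [h, show -blockDet B ψ i 0 - blockDet B ψ i 0 = -(2 * blockDet B ψ i 0) by ring,
        abs_neg, abs_mul, abs_two] at hlt
      have := abs_nonneg (blockDet B ψ i 0)
      linarith
  refine ⟨Metric.ball 0 ε, Metric.isOpen_ball, Metric.mem_ball_self hε,
    fun y hy => (hball y hy).1, fun i y hy z hz => by rw [hcst i y hy, hcst i z hz], ?_⟩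
  intro y hy
  rw [← hone]
  exact Finset.prod_congr rfl fun i _ => by rw [hcst i y hy]
end
end
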